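/- Consider homomorphisms of MV-algebras forming a commutative square m∘g = h∘e, where e: A → B is surjective with ker(e) ⊆ Rad(A), m: C → D satisfies ker(m) ∩ Rad(C) = {0}, g: A → C, and h: B → D. Then there exists a unique homomorphism d: B → C with d∘e = g and m∘d = h. (This is the orthogonality of the two classes of the stable factorization system on MV-algebras given by E = {surjections with kernel contained in the radical} and M = {homomorphisms whose kernel meets the radical trivially}.) -/

import Mathlib

/-!
Homomorphisms carry radicals into radicals, so `g` maps `ker e ⊆ Rad A` into `Rad C`, while
`m ∘ g = h ∘ e` forces `g (ker e) ⊆ ker m`. Since `ker m ∩ Rad C = {0}`, this gives `ker e ⊆ ker g`,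
and `g` descends along the surjection `e`. The remaining identity and uniqueness hold because `e`
can be cancelled on the right.
-/

namespace MVPaper

/-- An MV-algebra: a set with a binary `⊕`, a unary `¬`, and a constant `0`
satisfying the MV-algebra axioms. -/
class MV (α : Type*) where
  oplus : α → α → α
  neg : α → α
  zero : α
  oplus_assoc : ∀ x y z : α, oplus x (oplus y z) = oplus (oplus x y) z
  oplus_comm : ∀ x y : α, oplus x y = oplus y x
  oplus_zero : ∀ x : α, oplus x zero = x
  neg_neg : ∀ x : α, neg (neg x) = x
  oplus_neg_zero : ∀ x : α, oplus x (neg zero) = neg zero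
  lukasiewicz : ∀ x y : α,
    oplus (neg (oplus (neg x) y)) y = oplus (neg (oplus (neg y) x)) x

namespace MV

variable {α : Type*} [MV α]

/-- `1 := ¬0`. -/
def one : α := neg zero

/-- `x ⊙ y := ¬(¬x ⊕ ¬y)`. -/
def odot (x y : α) : α := neg (oplus (neg x) (neg y))

/-- `x ⊖ y := ¬(¬x ⊕ y)`. -/
def ominus (x y : α) : α := neg (oplus (neg x) y)

/-- `d(x,y) := (x ⊖ y) ⊕ (y ⊖ x)`. -/
def dist (x y : α) : α := oplus (ominus x y) (ominus y x)

/-- The natural order: `x ≤ y` iff `¬x ⊕ y = 1`. -/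
def le (x y : α) : Prop := oplus (neg x) y = one

/-- `x ∨ y := (x ⊖ y) ⊕ y`. -/
def sup (x y : α) : α := oplus (ominus x y) y

/-- `x ∧ y := x ⊙ (¬x ⊕ y)`. -/
def inf (x y : α) : α := odot x (oplus (neg x) y)

/-- `n · a`, the `n`-fold sum `a ⊕ ⋯ ⊕ a`. -/
def nsmul : ℕ → α → α
  | 0, _ => zero
  | n + 1, a => oplus a (nsmul n a)

end MV

/-- Products of MV-algebras, with componentwise operations. -/
instance prodMV {α β : Type*} [MV α] [MV β] : MV (α × β) where
  oplus x y := (MV.oplus x.1 y.1, MV.oplus x.2 y.2)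
  neg x := (MV.neg x.1, MV.neg x.2)
  zero := (MV.zero, MV.zero)
  oplus_assoc x y z :=
    congrArg₂ Prod.mk (MV.oplus_assoc _ _ _) (MV.oplus_assoc _ _ _)
  oplus_comm x y :=
    congrArg₂ Prod.mk (MV.oplus_comm _ _) (MV.oplus_comm _ _)
  oplus_zero x := by
    obtain ⟨a, b⟩ := x
    exact congrArg₂ Prod.mk (MV.oplus_zero a) (MV.oplus_zero b)
  neg_neg x := by
    obtain ⟨a, b⟩ := x
    exact congrArg₂ Prod.mk (MV.neg_neg a) (MV.neg_neg b)
  oplus_neg_zero x :=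
    congrArg₂ Prod.mk (MV.oplus_neg_zero _) (MV.oplus_neg_zero _)
  lukasiewicz x y :=
    congrArg₂ Prod.mk (MV.lukasiewicz _ _) (MV.lukasiewicz _ _)

/-- A homomorphism of MV-algebras: a map preserving `⊕`, `¬` and `0`. -/
structure IsHom {α β : Type*} [MV α] [MV β] (f : α → β) : Prop where
  map_zero : f MV.zero = MV.zero
  map_oplus : ∀ x y : α, f (MV.oplus x y) = MV.oplus (f x) (f y)
  map_neg : ∀ x : α, f (MV.neg x) = MV.neg (f x)

/-- An ideal of an MV-algebra: contains `0`, closed under `⊕`, downward closed. -/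
structure IsIdeal {α : Type*} [MV α] (I : Set α) : Prop where
  zero_mem : MV.zero ∈ I
  oplus_mem : ∀ ⦃x⦄, x ∈ I → ∀ ⦃y⦄, y ∈ I → MV.oplus x y ∈ I
  lower_mem : ∀ ⦃x⦄, x ∈ I → ∀ ⦃y⦄, MV.le y x → y ∈ I

/-- The kernel of a homomorphism. -/
def ker {α β : Type*} [MV α] [MV β] (f : α → β) : Set α := {x | f x = MV.zero}

/-- The radical of an MV-algebra: `Rad(A) = {a | n·a ≤ ¬a for all n}`
(the intersection of all maximal proper ideals). -/
def Rad (α : Type*) [MV α] : Set α :=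
  {a | ∀ n : ℕ, MV.le (MV.nsmul n a) (MV.neg a)}

/-- `P(A) := Rad(A) ∪ ¬Rad(A)`. -/
def PSet (α : Type*) [MV α] : Set α :=
  Rad α ∪ {x | MV.neg x ∈ Rad α}

/-- An MV-algebra is trivial if `0 = 1`. -/
def IsTrivial (α : Type*) [MV α] : Prop := (MV.zero : α) = MV.one

/-- An MV-algebra is semisimple if its radical is trivial. -/
def Semisimple (α : Type*) [MV α] : Prop := Rad α = ({MV.zero} : Set α)

/-- An MV-algebra is perfect if `A = Rad(A) ∪ ¬Rad(A)`. -/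
def Perfect (α : Type*) [MV α] : Prop := ∀ a : α, a ∈ PSet α

/-- `q : α → Q` realizes `Q` as the quotient of `α` by the ideal `I`,
i.e. by the congruence `x ∼ y ↔ d(x,y) ∈ I`. -/
structure IsQuotientBy {α Q : Type*} [MV α] [MV Q] (I : Set α) (q : α → Q) : Prop where
  hom : IsHom q
  surj : Function.Surjective q
  eq_iff : ∀ x y : α, q x = q y ↔ MV.dist x y ∈ I

namespace MV

variable {α : Type*} [MV α]

theorem zero_oplus (x : α) : oplus zero x = x := by
  rw [oplus_comm, oplus_zero]

theorem neg_oplus_self (x : α) : oplus (neg x) x = one := by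
  have h := lukasiewicz (neg zero) x
  rwa [neg_neg, zero_oplus, oplus_neg_zero] at h

theorem ominus_self (x : α) : ominus x x = zero := by
  rw [ominus, neg_oplus_self, one, neg_neg]

theorem right_eq_zero_of_oplus_eq_zero {x y : α} (h : oplus x y = zero) : y = zero := by
  have hneg : neg y = neg zero :=
    calc neg y = oplus (oplus x y) (neg y) := by rw [h, zero_oplus]
      _ = oplus x one := by rw [← oplus_assoc, oplus_comm y, neg_oplus_self]
      _ = neg zero := oplus_neg_zero x
  rw [← neg_neg y, hneg, neg_neg]

theorem oplus_eq_zero_iff {x y : α} : oplus x y = zero ↔ x = zero ∧ y = zero := by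
  refine ⟨fun h => ⟨?_, right_eq_zero_of_oplus_eq_zero h⟩, ?_⟩
  · exact right_eq_zero_of_oplus_eq_zero ((oplus_comm y x).trans h)
  · rintro ⟨rfl, rfl⟩
    exact oplus_zero zero

theorem ominus_oplus_comm (x y : α) : oplus (ominus x y) y = oplus (ominus y x) x :=
  lukasiewicz x y

theorem dist_eq_zero_iff {x y : α} : dist x y = zero ↔ x = y := by
  rw [dist, oplus_eq_zero_iff]
  constructor
  · rintro ⟨hxy, hyx⟩
    calc x = oplus (ominus y x) x := by rw [hyx, zero_oplus]
      _ = oplus (ominus x y) y := ominus_oplus_comm y x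
      _ = y := by rw [hxy, zero_oplus]
  · rintro rfl
    exact ⟨ominus_self x, ominus_self x⟩

end MV

namespace IsHom

variable {α β γ : Type*} [MV α] [MV β] [MV γ] {f : α → β} {g : α → γ}

theorem map_one (hf : IsHom f) : f MV.one = MV.one := by
  rw [MV.one, hf.map_neg, hf.map_zero, MV.one]

theorem map_ominus (hf : IsHom f) (x y : α) : f (MV.ominus x y) = MV.ominus (f x) (f y) := by
  simp only [MV.ominus, hf.map_neg, hf.map_oplus]

theorem map_dist (hf : IsHom f) (x y : α) : f (MV.dist x y) = MV.dist (f x) (f y) := by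
  simp only [MV.dist, hf.map_oplus, hf.map_ominus]

theorem map_nsmul (hf : IsHom f) (n : ℕ) (a : α) : f (MV.nsmul n a) = MV.nsmul n (f a) := by
  induction n with
  | zero => exact hf.map_zero
  | succ n ih => simp only [MV.nsmul, hf.map_oplus, ih]

theorem map_le (hf : IsHom f) {x y : α} (hxy : MV.le x y) : MV.le (f x) (f y) := by
  rw [MV.le, ← hf.map_neg, ← hf.map_oplus, hxy, hf.map_one]

theorem mapsTo_rad (hf : IsHom f) : Set.MapsTo f (Rad α) (Rad β) := fun a ha n => by
  rw [← hf.map_nsmul, ← hf.map_neg]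
  exact hf.map_le (ha n)

theorem dist_mem_ker_iff (hf : IsHom f) {x y : α} : MV.dist x y ∈ ker f ↔ f x = f y := by
  rw [ker, Set.mem_ofPred_eq, hf.map_dist, MV.dist_eq_zero_iff]

theorem factorsThrough_of_ker_subset (hf : IsHom f) (hg : IsHom g) (hker : ker f ⊆ ker g) :
    Function.FactorsThrough g f := fun _ _ hxy =>
  hg.dist_mem_ker_iff.mp (hker (hf.dist_mem_ker_iff.mpr hxy))

theorem of_comp_surjective (hf : IsHom f) (hsurj : Function.Surjective f) {d : β → γ}
    (hdf : IsHom (d ∘ f)) : IsHom d where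
  map_zero := by
    rw [← hf.map_zero]
    exact hdf.map_zero
  map_oplus := hsurj.forall₂.mpr fun x y => by
    rw [← hf.map_oplus]
    exact hdf.map_oplus x y
  map_neg := hsurj.forall.mpr fun x => by
    rw [← hf.map_neg]
    exact hdf.map_neg x

theorem exists_comp_eq_of_ker_subset (hf : IsHom f) (hsurj : Function.Surjective f)
    (hg : IsHom g) (hker : ker f ⊆ ker g) : ∃ d : β → γ, IsHom d ∧ d ∘ f = g := by
  have : Nonempty γ := ⟨MV.zero⟩
  obtain ⟨d, rfl⟩ :=
    (Function.factorsThrough_iff g).mp (hf.factorsThrough_of_ker_subset hg hker)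
  exact ⟨d, hf.of_comp_surjective hsurj hg, rfl⟩

theorem ker_subset_ker_comp (f : α → β) {h : β → γ} (hh : IsHom h) :
    ker f ⊆ ker (h ∘ f) := fun _ ha =>
  (congrArg h ha).trans hh.map_zero

theorem ker_comp_inter_rad_subset_ker (hf : IsHom f) {m : β → γ}
    (hm : ker m ∩ Rad β ⊆ {MV.zero}) : ker (m ∘ f) ∩ Rad α ⊆ ker f := fun _ ha =>
  hm ⟨ha.1, hf.mapsTo_rad ha.2⟩

end IsHom

/-- Orthogonality for the stable factorization system
`(E, M) = ({surjections with kernel ⊆ radical}, {maps with kernel ∩ radical = {0}})`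
on MV-algebras: given a commutative square `m ∘ g = h ∘ e` with `e : A → B`
surjective, `ker e ⊆ Rad A`, and `m : C → D` with `ker m ∩ Rad C = {0}`, there
is a unique homomorphism `d : B → C` with `d ∘ e = g` and `m ∘ d = h`. -/
theorem factorization_orthogonality {α β γ δ : Type*} [MV α] [MV β] [MV γ] [MV δ]
    {e : α → β} (he : IsHom e) (hes : Function.Surjective e)
    (hke : ker e ⊆ Rad α)
    {m : γ → δ} (hm : IsHom m) (hkm : ker m ∩ Rad γ = ({MV.zero} : Set γ))
    {g : α → γ} (hg : IsHom g) {h : β → δ} (hh : IsHom h)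
    (hcomm : m ∘ g = h ∘ e) :
    ∃! d : β → γ, IsHom d ∧ d ∘ e = g ∧ m ∘ d = h := by
  have hker_comp : ker e ⊆ ker (m ∘ g) := hcomm ▸ hh.ker_subset_ker_comp e
  have hker : ker e ⊆ ker g :=
    (Set.subset_inter hker_comp hke).trans (hg.ker_comp_inter_rad_subset_ker hkm.subset)
  obtain ⟨d, hd, hde⟩ := he.exists_comp_eq_of_ker_subset hes hg hker
  refine ⟨d, ⟨hd, hde, ?_⟩, ?_⟩
  · have hmde : (m ∘ d) ∘ e = h ∘ e := by rw [Function.comp_assoc, hde, hcomm]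
    exact hes.injective_comp_right hmde
  · rintro d' ⟨-, hd'e, -⟩
    exact hes.injective_comp_right (hd'e.trans hde.symm)

end MVPaper
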